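/- Let p^0 = q_r(s^0) be the initial strategy of the CULO model for some finite s^0, and suppose the CULO iterates p^t converge to a point p* ∈ P*. Then p* is the KL projection of p^0 onto P*: p* minimizes D(·, p^0) over P*. -/

import Mathlib

/-!
The demand-weighted pairing of the log-probabilities with the difference of two equilibria never
changes along the dynamics.

Strict monotonicity forces any two equilibria `p'`, `p*` to induce the same link flow. Hence
`∑ qₖ (p'ₖ - p*ₖ) cₖ(p) = ⟨u(bΛ p), bΛ (p' - p*)⟩ = 0` for every `p`, so `∑ qₖ (p'ₖ - p*ₖ) sᵗₖ` does
not depend on `t`. Since `log pᵗₖ` is `-r sᵗₖ` up to a term depending only on the OD pair,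
`∑ qₖ (p'ₖ - p*ₖ) log pᵗₖ` does not depend on `t` either, and so
`D(p', p⁰) - D(p*, p⁰) = D(p', pᵗ) - D(p*, pᵗ) ≥ -D(p*, pᵗ)` for all `t`. The right-hand side comes
arbitrarily close to `0` as soon as `pᵗ` comes arbitrarily close to `p*`.
-/

open Matrix Filter Finset Topology

noncomputable section

variable {A W K : Type*}

/-- OD-route incidence matrix `Σ`: each column is the standard unit vector at `od k`
(every route `k` serves exactly one OD pair, `od k`). -/
def Sig [DecidableEq W] (od : K → W) : Matrix W K ℝ :=
  Matrix.of fun w k => if od k = w then 1 else 0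

/-- The strategy set `P = {p : p ≥ 0, Σ p = 1}`. -/
def Pset [Fintype K] [DecidableEq W] (od : K → W) : Set (K → ℝ) :=
  {p | (∀ k, 0 ≤ p k) ∧ ∀ w : W, (Sig od).mulVec p w = 1}

/-- `q = Σᵀ d`. -/
def qvec [Fintype W] [DecidableEq W] (od : K → W) (d : W → ℝ) : K → ℝ :=
  (Sig od)ᵀ.mulVec d

/-- `bΛ = Λ · diag q`. -/
def bLam [Fintype K] [Fintype W] [DecidableEq W] [DecidableEq K]
    (Λ : Matrix A K ℝ) (od : K → W) (d : W → ℝ) : Matrix A K ℝ :=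
  Λ * Matrix.diagonal (qvec od d)

/-- The link-flow set `X = {bΛ p : p ∈ P}`. -/
def Xset [Fintype K] [Fintype W] [DecidableEq W] [DecidableEq K]
    (Λ : Matrix A K ℝ) (od : K → W) (d : W → ℝ) : Set (A → ℝ) :=
  (fun p => (bLam Λ od d).mulVec p) '' Pset od

/-- The route-cost map `c(p) = Λᵀ u(bΛ p)`. -/
def routeCost [Fintype A] [Fintype K] [Fintype W] [DecidableEq W] [DecidableEq K]
    (Λ : Matrix A K ℝ) (od : K → W) (d : W → ℝ)
    (u : (A → ℝ) → (A → ℝ)) : (K → ℝ) → (K → ℝ) :=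
  fun p => Λᵀ.mulVec (u ((bLam Λ od d).mulVec p))

/-- The UE set `P*`: solutions of the variational inequality. -/
def UEset [Fintype A] [Fintype K] [Fintype W] [DecidableEq W] [DecidableEq K]
    (Λ : Matrix A K ℝ) (od : K → W) (d : W → ℝ)
    (u : (A → ℝ) → (A → ℝ)) : Set (K → ℝ) :=
  {p | p ∈ Pset od ∧ ∀ p' ∈ Pset od, 0 ≤ routeCost Λ od d u p ⬝ᵥ (p' - p)}

/-- The logit map `q_r`. -/
def logit [Fintype K] [DecidableEq W] (od : K → W) (r : ℝ) (s : K → ℝ) : K → ℝ :=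
  fun k => Real.exp (-r * s k) /
    ∑ k' ∈ Finset.univ.filter (fun k' => od k' = od k), Real.exp (-r * s k')

/-- The negative entropy `φ(p) = ∑ₖ qₖ pₖ log pₖ` (with `0·log 0 = 0`). -/
def negEnt [Fintype K] [Fintype W] [DecidableEq W] (od : K → W) (d : W → ℝ)
    (p : K → ℝ) : ℝ :=
  ∑ k, qvec od d k * (p k * Real.log (p k))

/-- The KL divergence `D(p, p') = ∑ₖ qₖ pₖ (log pₖ − log p'ₖ)` (with `0·log 0 = 0`). -/
def KLdiv [Fintype K] [Fintype W] [DecidableEq W] (od : K → W) (d : W → ℝ)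
    (p p' : K → ℝ) : ℝ :=
  ∑ k, qvec od d k * (p k * (Real.log (p k) - Real.log (p' k)))

section Incidence

variable [Fintype K] [DecidableEq W]

lemma Sig_mulVec_apply (od : K → W) (z : K → ℝ) (w : W) :
    (Sig od *ᵥ z) w = ∑ k with od k = w, z k := by
  simp [Sig, mulVec, dotProduct, sum_filter]

lemma Sig_mulVec_comp_mul (od : K → W) (g : W → ℝ) (z : K → ℝ) :
    Sig od *ᵥ (g ∘ od * z) = g * Sig od *ᵥ z := by
  ext w
  simp only [Pi.mul_apply, Sig_mulVec_apply, mul_sum, Function.comp_apply]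
  exact sum_congr rfl fun k hk => by rw [(mem_filter.1 hk).2]

lemma Sig_mulVec_eq_one {od : K → W} {p : K → ℝ} (hp : p ∈ Pset od) : Sig od *ᵥ p = 1 :=
  funext hp.2

lemma Sig_mulVec_sub_eq_zero {od : K → W} {p p' : K → ℝ} (hp : p ∈ Pset od)
    (hp' : p' ∈ Pset od) : Sig od *ᵥ (p - p') = 0 := by
  rw [mulVec_sub, Sig_mulVec_eq_one hp, Sig_mulVec_eq_one hp', sub_self]

lemma surjective_of_mem_Pset {od : K → W} {p : K → ℝ} (hp : p ∈ Pset od) :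
    Function.Surjective od := by
  intro w
  have hsum : ∑ k with od k = w, p k ≠ 0 := by
    rw [← Sig_mulVec_apply, hp.2 w]
    exact one_ne_zero
  obtain ⟨k, hk, -⟩ := exists_ne_zero_of_sum_ne_zero hsum
  exact ⟨k, (mem_filter.1 hk).2⟩

lemma add_comp_mul_sub_mem_Pset {od : K → W} {p p' : K → ℝ} (hp : p ∈ Pset od)
    (hp' : p' ∈ Pset od) {θ : W → ℝ} (hθ₀ : 0 ≤ θ) (hθ₁ : θ ≤ 1) :
    p + θ ∘ od * (p' - p) ∈ Pset od := by
  refine ⟨fun k => ?_, congrFun ?_⟩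
  · calc
      0 ≤ (1 - θ (od k)) * p k + θ (od k) * p' k :=
        add_nonneg (mul_nonneg (sub_nonneg.2 (hθ₁ _)) (hp.1 k)) (mul_nonneg (hθ₀ _) (hp'.1 k))
      _ = (p + θ ∘ od * (p' - p)) k := by
        simp only [Pi.add_apply, Pi.mul_apply, Pi.sub_apply, Function.comp_apply]
        ring
  · rw [mulVec_add, Sig_mulVec_comp_mul, Sig_mulVec_sub_eq_zero hp' hp, Sig_mulVec_eq_one hp,
      mul_zero, add_zero]
    rfl

lemma comp_dotProduct_eq_dotProduct_Sig_mulVec [Fintype W] (od : K → W) (g : W → ℝ)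
    (z : K → ℝ) : (g ∘ od) ⬝ᵥ z = g ⬝ᵥ Sig od *ᵥ z := by
  rw [dotProduct_mulVec]
  congr 1
  ext k
  simp [Sig, vecMul, dotProduct]

end Incidence

lemma qvec_eq_comp [Fintype W] [DecidableEq W] (od : K → W) (d : W → ℝ) :
    qvec od d = d ∘ od := by
  ext k
  simp [qvec, Sig, mulVec, dotProduct]

section Equilibrium

variable [Fintype K] [Fintype W] [DecidableEq W] [DecidableEq K]

lemma bLam_mulVec (Λ : Matrix A K ℝ) (od : K → W) (d : W → ℝ) (z : K → ℝ) :
    bLam Λ od d *ᵥ z = Λ *ᵥ (qvec od d * z) := by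
  rw [bLam, ← mulVec_mulVec]
  congr 1
  ext k
  rw [mulVec_diagonal, Pi.mul_apply]

variable [Fintype A]

lemma routeCost_dotProduct_qvec_mul (Λ : Matrix A K ℝ) (od : K → W) (d : W → ℝ)
    (u : (A → ℝ) → (A → ℝ)) (p z : K → ℝ) :
    routeCost Λ od d u p ⬝ᵥ (qvec od d * z) = u (bLam Λ od d *ᵥ p) ⬝ᵥ bLam Λ od d *ᵥ z := by
  rw [routeCost, bLam_mulVec Λ od d z, dotProduct_mulVec, mulVec_transpose]

/-- Since `P` is a product of simplices, one may move from `p` towards `p'` by a different amount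
in each OD pair. -/
lemma routeCost_dotProduct_comp_mul_sub_nonneg {Λ : Matrix A K ℝ} {od : K → W} {d : W → ℝ}
    {u : (A → ℝ) → (A → ℝ)} {p p' : K → ℝ} (hp : p ∈ UEset Λ od d u) (hp' : p' ∈ Pset od)
    {g : W → ℝ} (hg : 0 ≤ g) :
    0 ≤ routeCost Λ od d u p ⬝ᵥ (g ∘ od * (p' - p)) := by
  obtain ⟨M, hM, hgM⟩ : ∃ M : ℝ, 0 < M ∧ ∀ w, g w ≤ M := by
    refine ⟨1 + ∑ w, g w, add_pos_of_pos_of_nonneg one_pos (sum_nonneg fun w _ => hg w),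
      fun w => ?_⟩
    have hle : g w ≤ ∑ w, g w := single_le_sum (fun w _ => hg w) (mem_univ w)
    linarith
  have hstep : p + (M⁻¹ • g) ∘ od * (p' - p) ∈ Pset od :=
    add_comp_mul_sub_mem_Pset hp.1 hp' (smul_nonneg (inv_nonneg.2 hM.le) hg)
      fun w => inv_mul_le_one_of_le₀ (hgM w) hM.le
  have hvi := hp.2 _ hstep
  rw [add_sub_cancel_left, Pi.smul_comp, smul_mul_assoc, dotProduct_smul, smul_eq_mul] at hvi
  exact nonneg_of_mul_nonneg_right hvi (inv_pos.2 hM)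

lemma linkCost_dotProduct_linkFlow_sub_nonneg {Λ : Matrix A K ℝ} {od : K → W} {d : W → ℝ}
    (hd : 0 ≤ d) {u : (A → ℝ) → (A → ℝ)} {p p' : K → ℝ} (hp : p ∈ UEset Λ od d u)
    (hp' : p' ∈ Pset od) :
    0 ≤ u (bLam Λ od d *ᵥ p) ⬝ᵥ (bLam Λ od d *ᵥ p' - bLam Λ od d *ᵥ p) := by
  rw [← mulVec_sub, ← routeCost_dotProduct_qvec_mul, qvec_eq_comp]
  exact routeCost_dotProduct_comp_mul_sub_nonneg hp hp' hd

lemma linkFlow_eq_of_mem_UEset {Λ : Matrix A K ℝ} {od : K → W} {d : W → ℝ} (hd : 0 ≤ d)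
    {u : (A → ℝ) → (A → ℝ)}
    (hmono : ∀ x ∈ Xset Λ od d, ∀ x' ∈ Xset Λ od d, x ≠ x' → 0 < (u x - u x') ⬝ᵥ (x - x'))
    {p p' : K → ℝ} (hp : p ∈ UEset Λ od d u) (hp' : p' ∈ UEset Λ od d u) :
    bLam Λ od d *ᵥ p = bLam Λ od d *ᵥ p' := by
  by_contra hne
  have hpos := hmono _ ⟨p, hp.1, rfl⟩ _ ⟨p', hp'.1, rfl⟩ hne
  have hvi := linkCost_dotProduct_linkFlow_sub_nonneg hd hp hp'.1
  have hvi' := linkCost_dotProduct_linkFlow_sub_nonneg hd hp' hp.1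
  rw [sub_dotProduct] at hpos
  rw [← neg_sub, dotProduct_neg] at hvi
  linarith

lemma valuation_dotProduct_qvec_mul_eq {Λ : Matrix A K ℝ} {od : K → W} {d : W → ℝ}
    {u : (A → ℝ) → (A → ℝ)} {η : ℕ → ℝ} {s p : ℕ → K → ℝ}
    (hs : ∀ t, s (t + 1) = s t + η (t + 1) • routeCost Λ od d u (p t))
    {z : K → ℝ} (hz : bLam Λ od d *ᵥ z = 0) (t : ℕ) :
    s t ⬝ᵥ (qvec od d * z) = s 0 ⬝ᵥ (qvec od d * z) := by
  induction t with
  | zero => rfl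
  | succ t ih =>
    rw [hs, add_dotProduct, smul_dotProduct, routeCost_dotProduct_qvec_mul, hz, dotProduct_zero,
      smul_zero, add_zero, ih]

end Equilibrium

section Logit

variable [Fintype K] [DecidableEq W]

/-- The partition function `w ↦ ∑ exp (-r sₖ)` of the logit map, the sum being over the routes `k`
of the OD pair `w`; it is the normalizer of `logit`, and vanishes if `w` has no route. -/
def logitPartition (od : K → W) (r : ℝ) (s : K → ℝ) (w : W) : ℝ :=
  ∑ k with od k = w, Real.exp (-r * s k)

lemma logit_apply (od : K → W) (r : ℝ) (s : K → ℝ) (k : K) :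
    logit od r s k = Real.exp (-r * s k) / logitPartition od r s (od k) :=
  rfl

lemma logitPartition_pos (od : K → W) (r : ℝ) (s : K → ℝ) (k : K) :
    0 < logitPartition od r s (od k) :=
  sum_pos (fun _ _ => Real.exp_pos _) ⟨k, by simp⟩

lemma logit_pos (od : K → W) (r : ℝ) (s : K → ℝ) (k : K) : 0 < logit od r s k :=
  div_pos (Real.exp_pos _) (logitPartition_pos od r s k)

lemma logit_mem_Pset {od : K → W} (hod : Function.Surjective od) (r : ℝ) (s : K → ℝ) :
    logit od r s ∈ Pset od := by
  refine ⟨fun k => (logit_pos od r s k).le, hod.forall.2 fun k => ?_⟩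
  calc
    (Sig od *ᵥ logit od r s) (od k)
      = ∑ k' with od k' = od k, Real.exp (-r * s k') / logitPartition od r s (od k) := by
        rw [Sig_mulVec_apply]
        exact sum_congr rfl fun k' hk' => by rw [logit_apply, (mem_filter.1 hk').2]
    _ = 1 := by
        rw [← sum_div]
        exact div_self (logitPartition_pos od r s k).ne'

lemma log_comp_logit (od : K → W) (r : ℝ) (s : K → ℝ) :
    Real.log ∘ logit od r s = -r • s - (Real.log ∘ logitPartition od r s) ∘ od := by
  ext k
  simp only [Function.comp_apply, Pi.sub_apply, Pi.smul_apply, smul_eq_mul]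
  rw [logit_apply, Real.log_div (Real.exp_ne_zero _) (logitPartition_pos od r s k).ne',
    Real.log_exp]

lemma log_comp_logit_dotProduct [Finite W] (od : K → W) (r : ℝ) (s : K → ℝ) {z : K → ℝ}
    (hz : Sig od *ᵥ z = 0) : (Real.log ∘ logit od r s) ⬝ᵥ z = -r * (s ⬝ᵥ z) := by
  cases nonempty_fintype W
  rw [log_comp_logit, sub_dotProduct, comp_dotProduct_eq_dotProduct_Sig_mulVec, hz,
    dotProduct_zero, sub_zero, smul_dotProduct, smul_eq_mul]

end Logit

lemma sub_le_mul_log_sub_log {x y : ℝ} (hx : 0 ≤ x) (hy : 0 < y) :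
    x - y ≤ x * (Real.log x - Real.log y) := by
  rcases hx.eq_or_lt with rfl | hx
  · simpa using hy.le
  · calc
      x - y = x * (1 - (x / y)⁻¹) := by field_simp
      _ ≤ x * Real.log (x / y) :=
        mul_le_mul_of_nonneg_left (Real.one_sub_inv_le_log_of_pos (div_pos hx hy)) hx.le
      _ = x * (Real.log x - Real.log y) := by rw [Real.log_div hx.ne' hy.ne']

section Divergence

variable [Fintype K] [Fintype W] [DecidableEq W]

lemma KLdiv_self (od : K → W) (d : W → ℝ) (p : K → ℝ) : KLdiv od d p p = 0 := by
  simp [KLdiv]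

lemma KLdiv_nonneg {od : K → W} {d : W → ℝ} (hd : 0 ≤ d) {p p' : K → ℝ} (hp : p ∈ Pset od)
    (hp' : p' ∈ Pset od) (hpos : ∀ k, 0 < p' k) : 0 ≤ KLdiv od d p p' := by
  calc
    0 = qvec od d ⬝ᵥ (p - p') := by
      rw [qvec_eq_comp, comp_dotProduct_eq_dotProduct_Sig_mulVec, Sig_mulVec_sub_eq_zero hp hp',
        dotProduct_zero]
    _ ≤ KLdiv od d p p' := by
      refine sum_le_sum fun k _ => ?_
      rw [qvec_eq_comp]
      exact mul_le_mul_of_nonneg_left (sub_le_mul_log_sub_log (hp.1 k) (hpos k)) (hd _)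

/-- Routes with `p k = 0` contribute nothing, so the singularity of `log` at zero is harmless. -/
lemma continuousAt_KLdiv_self (od : K → W) (d : W → ℝ) (p : K → ℝ) :
    ContinuousAt (KLdiv od d p) p := by
  refine tendsto_finsetSum _ fun k _ => Tendsto.const_mul _ ?_
  by_cases hk : p k = 0
  · simp [hk]
  · exact (((continuous_apply k).tendsto p).log hk |>.const_sub _).const_mul _

lemma KLdiv_eq_negEnt_sub (od : K → W) (d : W → ℝ) (p x : K → ℝ) :
    KLdiv od d p x = negEnt od d p - (Real.log ∘ x) ⬝ᵥ (qvec od d * p) := by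
  simp only [KLdiv, negEnt, dotProduct, ← sum_sub_distrib, Pi.mul_apply, Function.comp_apply]
  exact sum_congr rfl fun k _ => by ring

lemma KLdiv_logit_sub_KLdiv_logit {od : K → W} (d : W → ℝ) (r : ℝ) (s : K → ℝ) {p p' : K → ℝ}
    (hp : p ∈ Pset od) (hp' : p' ∈ Pset od) :
    KLdiv od d p' (logit od r s) - KLdiv od d p (logit od r s) =
      negEnt od d p' - negEnt od d p + r * (s ⬝ᵥ (qvec od d * (p' - p))) := by
  have hz : Sig od *ᵥ (qvec od d * (p' - p)) = 0 := by
    rw [qvec_eq_comp, Sig_mulVec_comp_mul, Sig_mulVec_sub_eq_zero hp' hp, mul_zero]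
  have hlog := log_comp_logit_dotProduct od r s hz
  rw [mul_sub, dotProduct_sub] at hlog
  rw [KLdiv_eq_negEnt_sub, KLdiv_eq_negEnt_sub, mul_sub]
  linarith

end Divergence

theorem statement7_general
    [Fintype A] [Fintype W] [Fintype K] [DecidableEq W] [DecidableEq K]
    (Λ : Matrix A K ℝ) (od : K → W) (d : W → ℝ) (hd : 0 ≤ d)
    (u : (A → ℝ) → (A → ℝ))
    (hmono : ∀ x ∈ Xset Λ od d, ∀ x' ∈ Xset Λ od d, x ≠ x' →
      0 < (u x - u x') ⬝ᵥ (x - x'))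
    (r : ℝ) (η : ℕ → ℝ) (s : ℕ → K → ℝ) (p : ℕ → K → ℝ)
    (hsdyn : ∀ t, s (t + 1) = s t + η (t + 1) • routeCost Λ od d u (p t))
    (hpdyn : ∀ t, p t = logit od r (s t))
    (pstar : K → ℝ) (hUE : pstar ∈ UEset Λ od d u)
    (hclosure : pstar ∈ closure (Set.range p)) :
    ∀ p' ∈ UEset Λ od d u, KLdiv od d pstar (p 0) ≤ KLdiv od d p' (p 0) := by
  intro p' hp'
  have hflow : bLam Λ od d *ᵥ (p' - pstar) = 0 := by
    rw [mulVec_sub, linkFlow_eq_of_mem_UEset hd hmono hp' hUE, sub_self]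
  have hgap (t : ℕ) : KLdiv od d p' (p t) - KLdiv od d pstar (p t) =
      KLdiv od d p' (p 0) - KLdiv od d pstar (p 0) := by
    rw [hpdyn t, hpdyn 0, KLdiv_logit_sub_KLdiv_logit d r _ hUE.1 hp'.1,
      KLdiv_logit_sub_KLdiv_logit d r _ hUE.1 hp'.1, valuation_dotProduct_qvec_mul_eq hsdyn hflow]
  have hnonneg (t : ℕ) : 0 ≤ KLdiv od d p' (p t) := by
    rw [hpdyn t]
    exact KLdiv_nonneg hd hp'.1 (logit_mem_Pset (surjective_of_mem_Pset hp'.1) r (s t))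
      (logit_pos od r (s t))
  have hbound : KLdiv od d pstar '' Set.range p ⊆
      Set.Ici (KLdiv od d pstar (p 0) - KLdiv od d p' (p 0)) := by
    rintro _ ⟨_, ⟨t, rfl⟩, rfl⟩
    exact Set.mem_Ici.2 (by linarith [hgap t, hnonneg t])
  have hlimit := closure_minimal hbound isClosed_Ici
    (mem_closure_image (continuousAt_KLdiv_self od d pstar) hclosure)
  rw [KLdiv_self, Set.mem_Ici] at hlimit
  exact sub_nonpos.1 hlimit

/-- Theorem 1: let `p⁰ = q_r(s⁰)` be the initial strategy of the
CULO model and suppose the iterates `pᵗ` converge to `p* ∈ P*`. Then `p*` is the KL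
projection of `p⁰` onto `P*`: it minimizes `D(·, p⁰)` over `P*`. -/
theorem statement7
    [Fintype A] [Fintype W] [Fintype K] [DecidableEq W] [DecidableEq K]
    (Λ : Matrix A K ℝ) (od : K → W) (d : W → ℝ)
    (hΛ : ∀ a k, Λ a k = 0 ∨ Λ a k = 1)
    (hd : ∀ w, 0 < d w)
    (u : (A → ℝ) → (A → ℝ))
    (hu : ContDiffOn ℝ 1 u (Xset Λ od d))
    (hnonneg : ∀ x ∈ Xset Λ od d, ∀ a, 0 ≤ u x a)
    (hmono : ∀ x ∈ Xset Λ od d, ∀ x' ∈ Xset Λ od d, x ≠ x' →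
      0 < (u x - u x') ⬝ᵥ (x - x'))
    (r : ℝ) (hr : 0 < r)
    (η : ℕ → ℝ) (hη : ∀ t, 0 < η t)
    (s : ℕ → K → ℝ) (p : ℕ → K → ℝ)
    (hsdyn : ∀ t, s (t + 1) = s t + η (t + 1) • routeCost Λ od d u (p t))
    (hpdyn : ∀ t, p t = logit od r (s t))
    (pstar : K → ℝ) (hUE : pstar ∈ UEset Λ od d u)
    (hconv : Tendsto p atTop (nhds pstar)) :
    ∀ p' ∈ UEset Λ od d u, KLdiv od d pstar (p 0) ≤ KLdiv od d p' (p 0) := by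
  exact statement7_general Λ od d (fun w => (hd w).le) u hmono r η s p hsdyn hpdyn pstar hUE
    (mem_closure_of_tendsto hconv (Eventually.of_forall Set.mem_range_self))
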